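/- arXiv:1706.08508 — 3 statements merged into one kernel-verified Lean document; each statement's English description precedes it below -/
import Mathlib

section
/- Let A, B, C be three non-collinear points in the Euclidean plane with dist(A,B) = dist(A,C) = l and dist(B,C) = b. Let M be the midpoint of BC and set q = dist(A,M). Let P be the point on the segment from A to C with dist(C,P) = b·l/(b + l), and set p = dist(B,P). Then 2p²·(l/b)³ + 3p²·(l/b)² − 4q²·(l/b) − p² = 0. -/
/-!
Put `X = l / b`. Since `2X³ + 3X² - 1 = (X + 1)² (2X - 1)`, the claim says
`p² (X + 1)² (2X - 1) = 4q² X`. Apollonius' theorem gives `4q² = (2l - b) (2l + b)`, and Stewart's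
theorem for the bisector from `B` gives `p² (X + 1)² = l (2l + b)`, so both sides equal
`(2l - b) (2l + b) X`.
-/

open EuclideanGeometry

section

variable {V E : Type*} [NormedAddCommGroup V] [InnerProductSpace ℝ V] [MetricSpace E]
  [NormedAddTorsor V E] {A B C P : E}

theorem dist_sq_mul_dist_add_dist_sq_mul_dist_of_wbtw (A : E) (hP : Wbtw ℝ B P C) :
    dist A B ^ 2 * dist C P + dist A C ^ 2 * dist B P =
      dist B C * (dist A P ^ 2 + dist B P * dist C P) := by
  rcases eq_or_ne P B with rfl | hPB
  · simp only [dist_self, dist_comm C P]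
    ring
  rcases eq_or_ne P C with rfl | hPC
  · simp only [dist_self]
    ring
  have hsbtw : Sbtw ℝ B P C := ⟨hP, hPB, hPC⟩
  exact dist_sq_mul_dist_add_dist_sq_mul_dist A B C P hsbtw.angle₁₂₃_eq_pi

/-- By the angle bisector theorem, `hCP` says that `P` is the foot of the bisector from `B`. -/
theorem dist_sq_angle_bisector_foot (hP : Wbtw ℝ A P C)
    (hCP : dist C P = dist B C * dist A C / (dist A B + dist B C)) :
    dist B P ^ 2 = dist A B * dist B C * (1 - (dist A C / (dist A B + dist B C)) ^ 2) := by
  rcases eq_or_ne A C with rfl | hAC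
  · obtain rfl : P = A := (wbtw_self_iff ℝ).1 hP
    simp only [dist_self, dist_comm B P]
    ring
  have hAC_pos : 0 < dist A C := dist_pos.2 hAC
  have hsum_pos : 0 < dist A B + dist B C := hAC_pos.trans_le (dist_triangle A B C)
  have hAP : dist A P = dist A B * dist A C / (dist A B + dist B C) := by
    have hadd := hP.dist_add_dist
    rw [dist_comm P C, hCP] at hadd
    rw [eq_sub_of_add_eq hadd]
    field
  have hstewart := dist_sq_mul_dist_add_dist_sq_mul_dist_of_wbtw B hP
  rw [hCP, hAP, dist_comm B A] at hstewart
  apply mul_left_cancel₀ hAC_pos.ne'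
  field_simp at hstewart ⊢
  linear_combination -hstewart

theorem four_mul_dist_midpoint_sq_of_dist_eq (h : dist A B = dist A C) :
    4 * dist A (midpoint ℝ B C) ^ 2 =
      (2 * dist A B - dist B C) * (2 * dist A B + dist B C) := by
  have happ := dist_sq_add_dist_sq_eq_two_mul_dist_midpoint_sq_add_half_dist_sq A B C
  rw [← h] at happ
  linear_combination -2 * happ

theorem stmt_3_general {l b p q : ℝ} (hne : B ≠ C)
    (hAB : dist A B = l) (hAC : dist A C = l) (hBC : dist B C = b)
    (hq : q = dist A (midpoint ℝ B C))
    (hP : Wbtw ℝ A P C) (hCP : dist C P = b * l / (b + l)) (hp : p = dist B P) :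
    2 * p ^ 2 * (l / b) ^ 3 + 3 * p ^ 2 * (l / b) ^ 2 - 4 * q ^ 2 * (l / b) - p ^ 2 = 0 := by
  have hb : 0 < b := hBC ▸ dist_pos.2 hne
  have hl : 0 ≤ l := hAB ▸ dist_nonneg
  have hmedian : 4 * q ^ 2 = (2 * l - b) * (2 * l + b) := by
    rw [hq, four_mul_dist_midpoint_sq_of_dist_eq (hAB.trans hAC.symm), hAB, hBC]
  have hbisector : p ^ 2 * (l / b + 1) ^ 2 = l * (2 * l + b) := by
    rw [hp, dist_sq_angle_bisector_foot hP (by rw [hCP, hAB, hAC, hBC, add_comm]), hAB, hAC, hBC]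
    field
  calc
    _ = p ^ 2 * (l / b + 1) ^ 2 * (2 * (l / b) - 1) - 4 * q ^ 2 * (l / b) := by ring
    _ = l * (2 * l + b) * (2 * (l / b) - 1) - (2 * l - b) * (2 * l + b) * (l / b) := by
      rw [hbisector, hmedian]
    _ = 0 := by field

end

theorem stmt_3 (A B C P : EuclideanSpace ℝ (Fin 2)) (l b p q : ℝ)
    (hcol : ¬ Collinear ℝ ({A, B, C} : Set (EuclideanSpace ℝ (Fin 2))))
    (hAB : dist A B = l) (hAC : dist A C = l) (hBC : dist B C = b)
    (hq : q = dist A (midpoint ℝ B C))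
    (hP : P ∈ segment ℝ A C) (hCP : dist C P = b * l / (b + l))
    (hp : p = dist B P) :
    2 * p ^ 2 * (l / b) ^ 3 + 3 * p ^ 2 * (l / b) ^ 2 - 4 * q ^ 2 * (l / b) - p ^ 2 = 0 :=
  stmt_3_general (ne₂₃_of_not_collinear hcol) hAB hAC hBC hq (mem_segment_iff_wbtw.1 hP) hCP hp
end

section
/- There is no polynomial h ∈ ℚ[X] such that 2 + 3·h − 4·X²·h² = h³ in ℚ[X]. -/
/-
A root `h` of `p(Y) = q * Y ^ n` with `n ≠ 0` divides the constant `p(0)`, so over a domain it is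
itself a nonzero constant as soon as `p(0) ≠ 0`. Comparing degrees in the equation then makes `q`
a constant. Here `p = 2 + 3 * Y - Y ^ 3`, while `q = 4 * X ^ 2` is not constant. Over a general
commutative ring one first reduces modulo a prime ideal that does not contain `2`.
-/

section

open Polynomial

variable {R : Type*} [CommRing R]

theorem dvd_comp_self_iff_dvd_C_coeff_zero {p h : R[X]} :
    h ∣ p.comp h ↔ h ∣ C (p.coeff 0) := by
  have hsub : h ∣ p.comp h - C (p.coeff 0) := by
    simpa using map_dvd (compRingHom h) (X_dvd_sub_C (p := p))
  exact dvd_iff_dvd_of_dvd_sub hsub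

variable [IsDomain R]

theorem natDegree_eq_zero_of_comp_eq_mul_pow {p q h : R[X]} {n : ℕ} (hn : n ≠ 0)
    (hp : p.coeff 0 ≠ 0) (heq : p.comp h = q * h ^ n) : q.natDegree = 0 := by
  obtain rfl | hq := eq_or_ne q 0
  · exact natDegree_zero
  have hdvd : h ∣ C (p.coeff 0) :=
    dvd_comp_self_iff_dvd_C_coeff_zero.1 (heq ▸ (dvd_pow_self h hn).mul_left q)
  have hh : h ≠ 0 := ne_zero_of_dvd_ne_zero (C_ne_zero.2 hp) hdvd
  have hdeg : h.natDegree = 0 := by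
    simpa using natDegree_le_of_dvd hdvd (C_ne_zero.2 hp)
  calc
    q.natDegree = (q * h ^ n).natDegree := by
      rw [natDegree_mul hq (pow_ne_zero n hh), natDegree_pow, hdeg, mul_zero, add_zero]
    _ = (p.comp h).natDegree := by rw [heq]
    _ = 0 := by rw [natDegree_comp, hdeg, mul_zero]

theorem two_add_three_mul_sub_four_mul_X_sq_mul_sq_ne_cube (h2 : (2 : R) ≠ 0) (h : R[X]) :
    2 + 3 * h - 4 * X ^ 2 * h ^ 2 ≠ h ^ 3 := by
  intro heq
  have hcomp : (2 + 3 * X - X ^ 3 : R[X]).comp h = C 4 * X ^ 2 * h ^ 2 := by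
    simp only [sub_comp, add_comp, mul_comp, pow_comp, X_comp, ofNat_comp, map_ofNat]
    linear_combination heq
  have hdeg : (C (4 : R) * X ^ 2).natDegree = 0 :=
    natDegree_eq_zero_of_comp_eq_mul_pow two_ne_zero (by simpa using h2) hcomp
  have h4 : (4 : R) ≠ 0 := by
    rw [show (4 : R) = 2 ^ 2 by norm_num]
    exact pow_ne_zero 2 h2
  rw [natDegree_C_mul_X_pow 2 4 h4] at hdeg
  exact two_ne_zero hdeg

end

open Polynomial in
theorem stmt_4_general {R : Type*} [CommRing R] (h2 : ¬ IsNilpotent (2 : R)) :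
    ¬ ∃ h : R[X], 2 + 3 * h - 4 * X ^ 2 * h ^ 2 = h ^ 3 := by
  rintro ⟨h, heq⟩
  obtain ⟨P, hP, h2P⟩ : ∃ P : Ideal R, P.IsPrime ∧ (2 : R) ∉ P := by
    simpa [nilpotent_iff_mem_prime] using h2
  have h2_quot : (2 : R ⧸ P) ≠ 0 := by
    rwa [← map_ofNat (Ideal.Quotient.mk P) 2, Ne, Ideal.Quotient.eq_zero_iff_mem]
  refine two_add_three_mul_sub_four_mul_X_sq_mul_sq_ne_cube h2_quot
    (h.map (Ideal.Quotient.mk P)) ?_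
  simpa using congrArg (Polynomial.map (Ideal.Quotient.mk P)) heq

open Polynomial in
theorem stmt_4 :
    ¬ ∃ h : Polynomial ℚ, 2 + 3 * h - 4 * X ^ 2 * h ^ 2 = h ^ 3 :=
  stmt_4_general (by simp)
end

section
/- Let q be a real number that is transcendental over ℚ, and let F = ℚ(q) be the subfield of ℝ generated by q over ℚ. Then the polynomial 2X³ + 3X² − 4q²·X − 1, regarded as a polynomial with coefficients in F, is irreducible over F. -/
set_option autoImplicit false

/-!
The polynomial is a cubic, so it suffices to show that it has no root in `ℚ(q) ≅ ℚ(t)`. Its leading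
and constant coefficients are nonzero rationals, that is, units of `ℚ[t]`; by the rational root
theorem a root would itself be a unit of `ℚ[t]`, hence a rational `r ≠ 0`. But then
`4 t² r = 2 r³ + 3 r² - 1` would be constant in `t`.
-/

section RationalRoot

open Polynomial IsFractionRing

variable {A K : Type*} [CommRing A] [IsDomain A] [UniqueFactorizationMonoid A] [Field K]
  [Algebra A K] [IsFractionRing A K] {p : A[X]}

theorem exists_unit_algebraMap_eq_of_aeval_eq_zero {x : K} (hlead : IsUnit p.leadingCoeff)
    (hconst : IsUnit (p.coeff 0)) (hx : aeval x p = 0) : ∃ u : Aˣ, algebraMap A K u = x := by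
  have hden : IsUnit (den A x : A) := isUnit_of_dvd_unit (den_dvd_of_is_root hx) hlead
  obtain ⟨y, rfl⟩ := isInteger_of_isUnit_den hden
  have hy : p.IsRoot y :=
    (aeval_algebraMap_eq_zero_iff_of_injective (IsFractionRing.injective A K)).1 hx
  exact ⟨(isUnit_of_dvd_unit hy.dvd_coeff_zero hconst).unit, rfl⟩

theorem irreducible_map_algebraMap_of_forall_unit_not_isRoot (hdeg : p.natDegree ∈ Finset.Icc 1 3)
    (hlead : IsUnit p.leadingCoeff) (hconst : IsUnit (p.coeff 0))
    (hroot : ∀ u : Aˣ, ¬ p.IsRoot u) : Irreducible (p.map (algebraMap A K)) := by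
  have hinj : Function.Injective (algebraMap A K) := IsFractionRing.injective A K
  refine irreducible_of_degree_le_three_of_not_isRoot
    (by rwa [natDegree_map_eq_of_injective hinj]) fun x hx => ?_
  rw [IsRoot, eval_map_algebraMap] at hx
  obtain ⟨u, rfl⟩ := exists_unit_algebraMap_eq_of_aeval_eq_zero hlead hconst hx
  exact hroot u ((aeval_algebraMap_eq_zero_iff_of_injective hinj).1 hx)

end RationalRoot

section Cubic

open Polynomial

variable {R : Type*} [CommRing R] [IsDomain R] {P : Cubic R[X]}

theorem cubic_not_isRoot_unit_of_natDegree_ne (ha : P.a.natDegree = 0) (hd : P.d.natDegree = 0)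
    (hbc : P.b.natDegree ≠ P.c.natDegree) (u : R[X]ˣ) : ¬ P.toPoly.IsRoot u := by
  intro hu
  obtain ⟨r, hr, hru⟩ := isUnit_iff.1 u.isUnit
  obtain ⟨a, haP⟩ := natDegree_eq_zero.1 ha
  obtain ⟨d, hdP⟩ := natDegree_eq_zero.1 hd
  have hrel : C r * P.c = -(C (r ^ 2) * P.b) - C (a * r ^ 3 + d) := by
    simp only [IsRoot, Cubic.toPoly, eval_add, eval_mul, eval_C, eval_pow, eval_X, ← hru, ← haP,
      ← hdP] at hu
    simp only [map_add, map_mul, map_pow]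
    linear_combination hu
  refine hbc ?_
  calc P.b.natDegree = (-(C (r ^ 2) * P.b) - C (a * r ^ 3 + d)).natDegree := by
        rw [natDegree_sub_C, natDegree_neg, natDegree_C_mul (hr.pow 2).ne_zero]
    _ = (C r * P.c).natDegree := by rw [hrel]
    _ = P.c.natDegree := natDegree_C_mul hr.ne_zero

theorem irreducible_cubic_map_algebraMap_of_natDegree_ne [UniqueFactorizationMonoid R]
    (F : Type*) [Field F] [Algebra R[X] F] [IsFractionRing R[X] F] (ha : IsUnit P.a)
    (hd : IsUnit P.d) (hbc : P.b.natDegree ≠ P.c.natDegree) :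
    Irreducible (P.map (algebraMap R[X] F)).toPoly := by
  rw [Cubic.map_toPoly]
  exact irreducible_map_algebraMap_of_forall_unit_not_isRoot
    (by rw [Cubic.natDegree_of_a_ne_zero ha.ne_zero]; decide)
    (by rwa [Cubic.leadingCoeff_of_a_ne_zero ha.ne_zero])
    (by rwa [Cubic.coeff_eq_d])
    (cubic_not_isRoot_unit_of_natDegree_ne (natDegree_eq_zero_of_isUnit ha)
      (natDegree_eq_zero_of_isUnit hd) hbc)

end Cubic

section Transcendental

open Polynomial IntermediateField

variable {K L : Type*} [Field K] [Field L] [Algebra K L] {q : L}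

theorem irreducible_map_aeval_gen_iff (hq : Transcendental K q) (p : K[X][X]) :
    Irreducible (p.map (aeval (R := K) (AdjoinSimple.gen K q) : K[X] →+* K⟮q⟯)) ↔
      Irreducible (p.map (algebraMap K[X] (RatFunc K))) := by
  let e : RatFunc K ≃+* K⟮q⟯ := (RatFunc.algEquivOfTranscendental q hq).toRingEquiv
  have he : (aeval (R := K) (AdjoinSimple.gen K q) : K[X] →+* K⟮q⟯) =
      (e : RatFunc K →+* K⟮q⟯).comp (algebraMap K[X] (RatFunc K)) :=
    RingHom.ext fun g => (RatFunc.algEquivOfTranscendental_algebraMap q hq g).symm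
  rw [he, ← Polynomial.map_map]
  exact MulEquiv.irreducible_iff (mapEquiv e)

theorem irreducible_cubic_map_aeval_gen_of_natDegree_ne (hq : Transcendental K q) {P : Cubic K[X]}
    (ha : IsUnit P.a) (hd : IsUnit P.d) (hbc : P.b.natDegree ≠ P.c.natDegree) :
    Irreducible (P.map (aeval (R := K) (AdjoinSimple.gen K q) : K[X] →+* K⟮q⟯)).toPoly := by
  rw [Cubic.map_toPoly, irreducible_map_aeval_gen_iff hq, ← Cubic.map_toPoly]
  exact irreducible_cubic_map_algebraMap_of_natDegree_ne (RatFunc K) ha hd hbc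

theorem stmt_7_general (hq : Transcendental K q) (h2 : (2 : K) ≠ 0) :
    Irreducible
      (C 2 * X ^ 3 + C 3 * X ^ 2 - C (4 * AdjoinSimple.gen K q ^ 2) * X - 1 : K⟮q⟯[X]) := by
  let P : Cubic K[X] := ⟨C 2, C 3, C (-4) * X ^ 2, C (-1)⟩
  have h4 : (-4 : K) ≠ 0 := by
    rw [neg_ne_zero, show (4 : K) = 2 ^ 2 by norm_num]
    exact pow_ne_zero 2 h2
  have hbc : P.b.natDegree ≠ P.c.natDegree := by
    rw [natDegree_C, natDegree_C_mul_X_pow 2 _ h4]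
    exact two_ne_zero.symm
  have hP := irreducible_cubic_map_aeval_gen_of_natDegree_ne hq (P := P)
    (isUnit_C.2 h2.isUnit) (isUnit_C.2 isUnit_one.neg) hbc
  convert hP using 1
  simp only [P, Cubic.map, Cubic.toPoly, RingHom.coe_coe, map_mul, map_pow, map_neg, map_ofNat,
    map_one, aeval_X]
  ring

end Transcendental

open Polynomial IntermediateField in
theorem stmt_7 (q : ℝ) (hq : Transcendental ℚ q) :
    Irreducible
      (C 2 * X ^ 3 + C 3 * X ^ 2 -
        C (4 * (IntermediateField.AdjoinSimple.gen ℚ q) ^ 2) * X - 1 :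
        Polynomial ℚ⟮q⟯) := by
  exact stmt_7_general hq two_ne_zero
end
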